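/- Let D be a category with finite products and terminal object p, let G₁, …, Gₙ be group objects of D with product group object G = G₁×…×Gₙ, let a: M×G → M be a right action of G on an object M, and let f: M → G' be an arrow to a group object G'. For α = 1,…,n let i_α: G_α → G be the canonical injection i_α(x) = (1,…,x,…,1), and define the α-th partial difference Δ_αf: M×G_α → G' by Δ_αf(u, g_α) := Δf(u, i_α∘g_α). Then: (i) for all arrows u': Z → M and g': Z → G_α, Δ_αf∘(u',g') = (f∘u')^{-1}·(f∘(a∘(u', i_α∘g'))) in Hom(Z,G'); and (ii) for all arrows u: Z → M and g_α: Z → G_α (α = 1,…,n), Δf∘(u, (g₁,…,gₙ)) = Δ₁f(u, g₁) · Δ₂f(u·i₁g₁, g₂) · … · Δₙf(u·i₁g₁·…·i_{n-1}g_{n-1}, gₙ) in the group Hom(Z,G'), where u·x denotes the action a and the dot between factors is multiplication in Hom(Z,G'). -/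

import Mathlib

/-!
Evaluated at the points `u₀ = u`, `u_k = u_{k-1} · i_k g_k`, the partial differences are
`f(u_{k-1})⁻¹ · f(u_k)`, so their ordered product telescopes to `f(u)⁻¹ · f(uₙ)`. The action law
gives `u_k = u · (g₁,…,g_k,1,…,1)`, and at `k = n` this is `u · (g₁,…,gₙ)`.
-/

open CategoryTheory CategoryTheory.Limits

noncomputable section

universe v u

namespace DiffCalc

variable {D : Type u} [Category.{v} D] [HasTerminal D] [HasBinaryProducts D]

/-- The multiplication of two generalized elements `a, b : Z ⟶ X` induced by an arrow
`m : X ⨯ X ⟶ X`. -/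
def gmul {X Z : D} (m : X ⨯ X ⟶ X) (a b : Z ⟶ X) : Z ⟶ X :=
  prod.lift a b ≫ m

/-- A group object structure on an object `X` of a category with finite products, with the
group axioms expressed for (generic) generalized elements. -/
structure GroupStr (X : D) where
  mul : X ⨯ X ⟶ X
  inv : X ⟶ X
  one : ⊤_ D ⟶ X
  mul_assoc' : ∀ {Z : D} (a b c : Z ⟶ X),
    gmul mul (gmul mul a b) c = gmul mul a (gmul mul b c)
  one_mul' : ∀ {Z : D} (a : Z ⟶ X), gmul mul (terminal.from Z ≫ one) a = a
  mul_one' : ∀ {Z : D} (a : Z ⟶ X), gmul mul a (terminal.from Z ≫ one) = a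
  mul_inv' : ∀ {Z : D} (a : Z ⟶ X), gmul mul a (a ≫ inv) = terminal.from Z ≫ one
  inv_mul' : ∀ {Z : D} (a : Z ⟶ X), gmul mul (a ≫ inv) a = terminal.from Z ≫ one

/-- The unit generalized element `1 : Z ⟶ X` of a group object. -/
def gone {X : D} (s : GroupStr X) (Z : D) : Z ⟶ X :=
  terminal.from Z ≫ s.one

/-- The group of generalized elements `Z ⟶ X` of a group object `X`. -/
def homGroup {X : D} (s : GroupStr X) (Z : D) : Group (Z ⟶ X) where
  mul a b := gmul s.mul a b
  one := gone s Z
  inv a := a ≫ s.inv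
  mul_assoc := s.mul_assoc'
  one_mul := s.one_mul'
  mul_one := s.mul_one'
  inv_mul_cancel := s.inv_mul'

/-- A morphism of group objects, in generalized-element form. -/
structure IsGroupHom {X Y : D} (sX : GroupStr X) (sY : GroupStr Y) (f : X ⟶ Y) : Prop where
  map_mul : ∀ {Z : D} (a b : Z ⟶ X), gmul sX.mul a b ≫ f = gmul sY.mul (a ≫ f) (b ≫ f)
  map_inv : ∀ {Z : D} (a : Z ⟶ X), (a ≫ sX.inv) ≫ f = (a ≫ f) ≫ sY.inv
  map_one : ∀ (Z : D), gone sX Z ≫ f = gone sY Z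

/-- A `U`-family of morphisms of group objects `l : U ⨯ G ⟶ G'`, in
generalized-element form. -/
structure IsGroupHomFamily {U G G' : D} (sG : GroupStr G) (sG' : GroupStr G')
    (l : U ⨯ G ⟶ G') : Prop where
  map_mul : ∀ {Z : D} (u : Z ⟶ U) (g₁ g₂ : Z ⟶ G),
    prod.lift u (gmul sG.mul g₁ g₂) ≫ l =
      gmul sG'.mul (prod.lift u g₁ ≫ l) (prod.lift u g₂ ≫ l)
  map_inv : ∀ {Z : D} (u : Z ⟶ U) (g : Z ⟶ G),
    prod.lift u (g ≫ sG.inv) ≫ l = (prod.lift u g ≫ l) ≫ sG'.inv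
  map_one : ∀ {Z : D} (u : Z ⟶ U), prod.lift u (gone sG Z) ≫ l = gone sG' Z

/-- A right action of a group object `G` on an object `M`, in generalized-element form. -/
structure IsRightAction {G M : D} (s : GroupStr G) (a : M ⨯ G ⟶ M) : Prop where
  act_act : ∀ {Z : D} (m : Z ⟶ M) (g₁ g₂ : Z ⟶ G),
    prod.lift (prod.lift m g₁ ≫ a) g₂ ≫ a = prod.lift m (gmul s.mul g₁ g₂) ≫ a
  act_one : ∀ {Z : D} (m : Z ⟶ M), prod.lift m (gone s Z) ≫ a = m

/-- The difference arrow `Δf : M ⨯ G ⟶ G'` of `f : M ⟶ G'` with respect to a right action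
`a : M ⨯ G ⟶ M`:  `Δf(u,g) = (f u)⁻¹ ⬝ f (u ⬝ g)`. -/
def diffArrow {M G G' : D} (sG' : GroupStr G') (a : M ⨯ G ⟶ M) (f : M ⟶ G') :
    M ⨯ G ⟶ G' :=
  gmul sG'.mul ((prod.fst ≫ f) ≫ sG'.inv) (a ≫ f)


section Statement13

variable {D : Type u} [Category.{v} D] [HasTerminal D] [HasBinaryProducts D]
  [HasFiniteProducts D]

variable {n : ℕ} {Gs : Fin n → D}

/-- The canonical injection `i_α : G_α ⟶ G₁ × ⋯ × Gₙ`, `i_α(x) = (1,…,x,…,1)`. -/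
def canInj (strs : ∀ α, GroupStr (Gs α)) (α : Fin n) : Gs α ⟶ ∏ᶜ Gs :=
  Pi.lift (fun β => if h : α = β then eqToHom (congrArg Gs h) else gone (strs β) (Gs α))

/-- The `α`-th partial difference arrow `Δ_α f := Δf ∘ (pr_M, i_α ∘ pr_{G_α})`. -/
def partialDiffArrow {M G' : D} (strs : ∀ α, GroupStr (Gs α)) (sG' : GroupStr G')
    (a : M ⨯ (∏ᶜ Gs) ⟶ M) (f : M ⟶ G') (α : Fin n) : M ⨯ Gs α ⟶ G' :=
  prod.map (𝟙 M) (canInj strs α) ≫ diffArrow sG' a f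

/-- The iterated action points `u, u·i₁g₁, u·i₁g₁·i₂g₂, …`. -/
def actPts {M Z : D} (a : M ⨯ (∏ᶜ Gs) ⟶ M) (inj : ∀ α, Gs α ⟶ ∏ᶜ Gs)
    (u : Z ⟶ M) (gs : ∀ α, Z ⟶ Gs α) : ℕ → (Z ⟶ M)
  | 0 => u
  | k + 1 =>
      if h : k < n then
        prod.lift (actPts a inj u gs k) (gs ⟨k, h⟩ ≫ inj ⟨k, h⟩) ≫ a
      else actPts a inj u gs k

section GeneralizedElements

variable {C : Type u} [Category.{v} C] [HasBinaryProducts C]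

theorem comp_gmul {X Y Z : C} (m : X ⨯ X ⟶ X) (w : Y ⟶ Z) (b c : Z ⟶ X) :
    w ≫ gmul m b c = gmul m (w ≫ b) (w ≫ c) := by
  simp only [gmul, prod.comp_lift_assoc]

theorem gmul_comp_of_mul_comp {X Y Z : C} {m : X ⨯ X ⟶ X} {m' : Y ⨯ Y ⟶ Y} {f : X ⟶ Y}
    (h : m ≫ f = gmul m' (prod.fst ≫ f) (prod.snd ≫ f)) (b c : Z ⟶ X) :
    gmul m b c ≫ f = gmul m' (b ≫ f) (c ≫ f) := by
  rw [gmul, Category.assoc, h, comp_gmul, prod.lift_fst_assoc, prod.lift_snd_assoc]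

variable [HasTerminal C]

theorem comp_gone {X Y Z : C} (s : GroupStr X) (w : Y ⟶ Z) : w ≫ gone s Z = gone s Y := by
  simp only [gone, terminal.comp_from_assoc]

theorem gone_gmul {X Z : C} (s : GroupStr X) (b : Z ⟶ X) : gmul s.mul (gone s Z) b = b :=
  s.one_mul' b

theorem gmul_gone {X Z : C} (s : GroupStr X) (b : Z ⟶ X) : gmul s.mul b (gone s Z) = b :=
  s.mul_one' b

theorem isGroupHom_of_comp_eq {X Y : C} {sX : GroupStr X} {sY : GroupStr Y} {f : X ⟶ Y}
    (hmul : sX.mul ≫ f = gmul sY.mul (prod.fst ≫ f) (prod.snd ≫ f))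
    (hinv : sX.inv ≫ f = f ≫ sY.inv) (hone : sX.one ≫ f = sY.one) : IsGroupHom sX sY f where
  map_mul := gmul_comp_of_mul_comp hmul
  map_inv b := by rw [Category.assoc, hinv, Category.assoc]
  map_one Z := by rw [gone, Category.assoc, hone, gone]

theorem lift_comp_diffArrow {M G G' Z : C} (sG' : GroupStr G') (a : M ⨯ G ⟶ M) (f : M ⟶ G')
    (u : Z ⟶ M) (g : Z ⟶ G) :
    prod.lift u g ≫ diffArrow sG' a f =
      gmul sG'.mul ((u ≫ f) ≫ sG'.inv) ((prod.lift u g ≫ a) ≫ f) := by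
  simp only [diffArrow, comp_gmul, prod.lift_fst_assoc, Category.assoc]

end GeneralizedElements

theorem prod_ofFn_inv_mul_succ {H : Type*} [Group H] {n : ℕ} (F : Fin (n + 1) → H) :
    (List.ofFn fun i : Fin n => (F i.castSucc)⁻¹ * F i.succ).prod = (F 0)⁻¹ * F (Fin.last n) := by
  rw [eq_inv_mul_iff_mul_eq]
  simpa [Fin.partialProd, List.take_of_length_le] using
    congr_fun (Fin.partialProd_left_inv F) (Fin.last n)

theorem canInj_comp_π_self (strs : ∀ α, GroupStr (Gs α)) (α : Fin n) :
    canInj strs α ≫ Pi.π Gs α = 𝟙 (Gs α) := by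
  simp [canInj]

theorem canInj_comp_π_of_ne (strs : ∀ α, GroupStr (Gs α)) {α β : Fin n} (h : α ≠ β) :
    canInj strs α ≫ Pi.π Gs β = gone (strs β) (Gs α) := by
  simp [canInj, h]

/-- The generalized element `(g₁,…,g_k,1,…,1)` of `G₁ × ⋯ × Gₙ` obtained by truncating
`(g₁,…,gₙ)`. It is the product of the first `k` of the `i_α g_α`, by which `actPts` has translated
the base point after `k` steps; `k` ranges over `ℕ` to match the indexing of `actPts`. -/
def truncPt {Z : D} (strs : ∀ α, GroupStr (Gs α)) (gs : ∀ α, Z ⟶ Gs α) (k : ℕ) : Z ⟶ ∏ᶜ Gs :=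
  Pi.lift fun β => if β < k then gs β else gone (strs β) Z

theorem truncPt_comp_π {Z : D} (strs : ∀ α, GroupStr (Gs α)) (gs : ∀ α, Z ⟶ Gs α) (k : ℕ)
    (β : Fin n) : truncPt strs gs k ≫ Pi.π Gs β = if β < k then gs β else gone (strs β) Z :=
  Pi.lift_π _ β

theorem truncPt_self {Z : D} (strs : ∀ α, GroupStr (Gs α)) (gs : ∀ α, Z ⟶ Gs α) :
    truncPt strs gs n = Pi.lift gs := by
  simp only [truncPt, Fin.is_lt, if_true]

theorem actPts_succ {C : Type u} [Category.{v} C] [HasBinaryProducts C] [HasFiniteProducts C]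
    {Gs : Fin n → C} {M Z : C} (a : M ⨯ (∏ᶜ Gs) ⟶ M) (inj : ∀ α, Gs α ⟶ ∏ᶜ Gs) (u : Z ⟶ M)
    (gs : ∀ α, Z ⟶ Gs α) (α : Fin n) :
    actPts a inj u gs (α + 1) = prod.lift (actPts a inj u gs α) (gs α ≫ inj α) ≫ a :=
  dif_pos α.is_lt

section ProductGroup

variable {strs : ∀ α, GroupStr (Gs α)} {sP : GroupStr (∏ᶜ Gs)}

theorem truncPt_zero {Z : D} (hπ : ∀ α, IsGroupHom sP (strs α) (Pi.π Gs α))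
    (gs : ∀ α, Z ⟶ Gs α) : truncPt strs gs 0 = gone sP Z := by
  refine Pi.hom_ext _ _ fun β => ?_
  rw [truncPt_comp_π, if_neg (Nat.not_lt_zero β), (hπ β).map_one]

theorem truncPt_succ {Z : D} (hπ : ∀ α, IsGroupHom sP (strs α) (Pi.π Gs α))
    (gs : ∀ α, Z ⟶ Gs α) (α : Fin n) :
    truncPt strs gs (α + 1) = gmul sP.mul (truncPt strs gs α) (gs α ≫ canInj strs α) := by
  refine Pi.hom_ext _ _ fun β => ?_
  rw [(hπ β).map_mul, truncPt_comp_π, truncPt_comp_π, Category.assoc]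
  obtain rfl | hne := eq_or_ne α β
  · rw [if_pos (Nat.lt_succ_self _), if_neg (lt_irrefl _), canInj_comp_π_self, Category.comp_id,
      gone_gmul]
  · have hlt : (β : ℕ) < α + 1 ↔ (β : ℕ) < α := by
      have := Fin.val_ne_of_ne hne
      omega
    simp only [hlt, canInj_comp_π_of_ne strs hne, comp_gone, gmul_gone]

theorem actPts_canInj_eq_truncPt_act {M Z : D}
    (hπ : ∀ α, IsGroupHom sP (strs α) (Pi.π Gs α)) {a : M ⨯ (∏ᶜ Gs) ⟶ M}
    (ha : IsRightAction sP a) (u : Z ⟶ M) (gs : ∀ α, Z ⟶ Gs α) {k : ℕ} (hk : k ≤ n) :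
    actPts a (canInj strs) u gs k = prod.lift u (truncPt strs gs k) ≫ a := by
  induction k with
  | zero => rw [actPts, truncPt_zero hπ, ha.act_one]
  | succ k ih =>
    rw [actPts_succ a _ u gs ⟨k, hk⟩, ih (Nat.le_of_succ_le hk), ha.act_act,
      truncPt_succ hπ gs ⟨k, hk⟩]

end ProductGroup

section PartialDifferences

variable {M G' Z : D} (strs : ∀ α, GroupStr (Gs α)) (sG' : GroupStr G')
  (a : M ⨯ (∏ᶜ Gs) ⟶ M) (f : M ⟶ G')

theorem lift_comp_partialDiffArrow {α : Fin n} (u : Z ⟶ M) (g : Z ⟶ Gs α) :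
    prod.lift u g ≫ partialDiffArrow strs sG' a f α =
      gmul sG'.mul ((u ≫ f) ≫ sG'.inv) ((prod.lift u (g ≫ canInj strs α) ≫ a) ≫ f) := by
  rw [partialDiffArrow, prod.lift_map_assoc, Category.comp_id, lift_comp_diffArrow]

theorem prod_ofFn_partialDiffArrow_actPts (u : Z ⟶ M) (gs : ∀ α, Z ⟶ Gs α) :
    letI : Group (Z ⟶ G') := homGroup sG' Z
    (List.ofFn fun α : Fin n =>
        prod.lift (actPts a (canInj strs) u gs α) (gs α) ≫ partialDiffArrow strs sG' a f α).prod =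
      gmul sG'.mul ((u ≫ f) ≫ sG'.inv) (actPts a (canInj strs) u gs n ≫ f) := by
  let : Group (Z ⟶ G') := homGroup sG' Z
  simp only [lift_comp_partialDiffArrow, ← actPts_succ]
  exact prod_ofFn_inv_mul_succ fun k : Fin (n + 1) => actPts a (canInj strs) u gs k ≫ f

end PartialDifferences

/-- (i) the pointwise formula for the `α`-th partial difference arrow, and
(ii) the expression of `Δf` as the ordered product of the partial differences
`Δ_α f` evaluated at the successively translated points. -/
theorem partialDiffArrow_formulas {M G' : D}
    (strs : ∀ α, GroupStr (Gs α)) (sP : GroupStr (∏ᶜ Gs)) (sG' : GroupStr G')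
    (hmul : ∀ α, sP.mul ≫ Pi.π Gs α =
      gmul (strs α).mul (prod.fst ≫ Pi.π Gs α) (prod.snd ≫ Pi.π Gs α))
    (hinv : ∀ α, sP.inv ≫ Pi.π Gs α = Pi.π Gs α ≫ (strs α).inv)
    (hone : ∀ α, sP.one ≫ Pi.π Gs α = (strs α).one)
    (a : M ⨯ (∏ᶜ Gs) ⟶ M) (ha : IsRightAction sP a) (f : M ⟶ G') :
    (∀ (α : Fin n) (Z : D) (u' : Z ⟶ M) (g' : Z ⟶ Gs α),
      prod.lift u' g' ≫ partialDiffArrow strs sG' a f α =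
        gmul sG'.mul ((u' ≫ f) ≫ sG'.inv)
          ((prod.lift u' (g' ≫ canInj strs α) ≫ a) ≫ f)) ∧
    (∀ (Z : D) (u : Z ⟶ M) (gs : ∀ α, Z ⟶ Gs α),
      letI : Group (Z ⟶ G') := homGroup sG' Z
      prod.lift u (Pi.lift gs) ≫ diffArrow sG' a f =
        (List.ofFn (fun α : Fin n =>
          prod.lift (actPts a (canInj strs) u gs α.1) (gs α) ≫
            partialDiffArrow strs sG' a f α)).prod) := by
  have hπ : ∀ α, IsGroupHom sP (strs α) (Pi.π Gs α) := fun α =>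
    isGroupHom_of_comp_eq (hmul α) (hinv α) (hone α)
  refine ⟨fun α Z u' g' => lift_comp_partialDiffArrow strs sG' a f u' g', fun Z u gs => ?_⟩
  have hend : actPts a (canInj strs) u gs n = prod.lift u (Pi.lift gs) ≫ a := by
    rw [actPts_canInj_eq_truncPt_act hπ ha u gs le_rfl, truncPt_self]
  rw [prod_ofFn_partialDiffArrow_actPts, hend, lift_comp_diffArrow]

end Statement13

end DiffCalc
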